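/- arXiv:2306.14075 — 5 statements merged into one kernel-verified Lean document; each statement's English description precedes it below -/
import Mathlib

section
/- Let R be a nonempty finite relation over an attribute set X, let P be a probability distribution on the tuples of R, and let h : 2^X → ℝ be the entropic vector of the jointly distributed attribute variables under P (so h(W) is the Shannon entropy of the marginal of P on the attributes W). Then for all subsets U, V ⊆ X and every p ∈ (0, ∞] (with the convention 1/∞ = 0): (1/p)·h(U) + h(V|U) ≤ log₂ ||deg_R(V|U)||_p. -/
open scoped BigOperators ENNReal

namespace JoinBounds

noncomputable section

variable {A α : Type*}

/-- The projection of a tuple `t : A → α` onto the attribute set `U`, represented as a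
partial tuple. -/
def proj [DecidableEq A] (U : Finset A) (t : A → α) : A → Option α :=
  fun x => if x ∈ U then some (t x) else none

/-- The projection of a relation `R` onto the attribute set `U`. -/
def projR [Fintype A] [DecidableEq A] [DecidableEq α] (U : Finset A) (R : Finset (A → α)) :
    Finset (A → Option α) :=
  R.image (proj U)

/-- The degree of a `U`-tuple `u` in `R`: the number of distinct `V`-tuples
appearing in `R` together with `u`. -/
def deg [Fintype A] [DecidableEq A] [DecidableEq α] (U V : Finset A) (R : Finset (A → α))
    (u : A → Option α) : ℕ :=
  (projR V (R.filter fun t => proj U t = u)).card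

/-- The `ℓ_p`-norm of the degree sequence `deg_R(V|U)`, for `p ∈ (0, ∞]`. -/
def lpNorm [Fintype A] [DecidableEq A] [DecidableEq α] (U V : Finset A) (R : Finset (A → α))
    (p : ℝ≥0∞) : ℝ :=
  if p = ⊤ then (((projR U R).sup fun u => deg U V R u : ℕ) : ℝ)
  else (∑ u ∈ projR U R, (deg U V R u : ℝ) ^ p.toReal) ^ (1 / p.toReal)

/-- The marginal probability, on the attribute set `W`, of the partial tuple `w`, under a
probability distribution `P` on the tuples of `R`. -/
def marg [Fintype A] [DecidableEq A] [DecidableEq α] (P : (A → α) → ℝ) (R : Finset (A → α))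
    (W : Finset A) (w : A → Option α) : ℝ :=
  ∑ t ∈ R.filter fun t => proj W t = w, P t

/-- The (base-2 Shannon) entropy of the marginal on the attribute set `W` of the
distribution `P` on the tuples of `R`: this is the entropic vector `h(W)`. -/
def entropy [Fintype A] [DecidableEq A] [DecidableEq α] (P : (A → α) → ℝ) (R : Finset (A → α))
    (W : Finset A) : ℝ :=
  -∑ w ∈ projR W R, marg P R W w * Real.logb 2 (marg P R W w)

end

end JoinBounds

namespace JoinBounds

/-!
Write `m(u)` for the marginal of `P` on `U` and `d(u)` for the degree of `u`. Given `u`, the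
`V`-tuple takes at most `d(u)` values, so `h(V|U) ≤ ∑ m(u) log d(u)`. For `p < ∞`, Gibbs'
variational principle `h(U) + ∑ m(u) log c(u) ≤ log ∑ c(u)` with `c = d ^ p` gives
`h(U) + p ∑ m(u) log d(u) ≤ p log ‖d‖_p`; divide by `p` and add. For `p = ∞`, the mean of `log d`
is at most its maximum. Both entropy estimates come from the log-sum inequality
`(∑ a) log (∑ a / ∑ c) ≤ ∑ a log (a / c)`, with `c = 1` on each fibre over `u` and with `c = d ^ p`.
-/

lemma sum_mul_logb_sum_div_sum_le {ι : Type*} {β : ℝ} (hβ : 1 < β) {s : Finset ι} {a c : ι → ℝ}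
    (ha : ∀ i ∈ s, 0 ≤ a i) (hc : ∀ i ∈ s, 0 ≤ c i) (hac : ∀ i ∈ s, c i = 0 → a i = 0) :
    (∑ i ∈ s, a i) * Real.logb β ((∑ i ∈ s, a i) / ∑ i ∈ s, c i)
      ≤ ∑ i ∈ s, a i * Real.logb β (a i / c i) := by
  rcases (Finset.sum_nonneg hc).eq_or_lt with hC | hC
  · have ha0 : ∀ i ∈ s, a i = 0 := fun i hi =>
      hac i hi ((Finset.sum_eq_zero_iff_of_nonneg hc).1 hC.symm i hi)
    rw [← hC, div_zero, Real.logb_zero, mul_zero]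
    exact Finset.sum_nonneg fun i hi => by rw [ha0 i hi, zero_mul]
  have mul_ratio : ∀ i ∈ s, c i * (a i / c i) = a i :=
    fun i hi => mul_div_cancel_of_imp' (hac i hi)
  have mul_ratio_mul_log : ∀ i ∈ s,
      c i * (a i / c i * Real.log (a i / c i)) = a i * Real.log (a i / c i) :=
    fun i hi => by rw [← mul_assoc, mul_ratio i hi]
  have jensen := Real.convexOn_mul_log.map_centerMass_le hc hC
    fun i hi => div_nonneg (ha i hi) (hc i hi)
  simp only [Finset.centerMass, smul_eq_mul, Function.comp_apply, Finset.sum_congr rfl mul_ratio,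
    Finset.sum_congr rfl mul_ratio_mul_log, inv_mul_eq_div] at jensen
  rw [div_mul_eq_mul_div, div_le_div_iff_of_pos_right hC] at jensen
  simp only [Real.logb, ← mul_div_assoc, ← Finset.sum_div]
  exact div_le_div_of_nonneg_right jensen (Real.log_pos hβ).le

section Projection

variable {A α : Type*} [DecidableEq A] {U V : Finset A} {s t : A → α}

lemma proj_eq_proj_iff : proj U s = proj U t ↔ ∀ x ∈ U, s x = t x := by
  refine funext_iff.trans (forall_congr' fun x => ?_)
  by_cases hx : x ∈ U <;> simp [proj, hx]

lemma proj_union_eq_proj_union_iff :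
    proj (U ∪ V) s = proj (U ∪ V) t ↔ proj U s = proj U t ∧ proj V s = proj V t := by
  simp only [proj_eq_proj_iff, Finset.forall_mem_union]

end Projection

section Entropy

variable {A α : Type*} [Fintype A] [DecidableEq A] [DecidableEq α]
  {P : (A → α) → ℝ} {R : Finset (A → α)}

lemma proj_mem_projR (U : Finset A) {t : A → α} (ht : t ∈ R) : proj U t ∈ projR U R :=
  Finset.mem_image_of_mem _ ht

lemma deg_pos {U : Finset A} (V : Finset A) {u : A → Option α} (hu : u ∈ projR U R) :
    0 < deg U V R u := by
  obtain ⟨t, ht, rfl⟩ := Finset.mem_image.1 hu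
  exact Finset.card_pos.2 ⟨proj V t, proj_mem_projR V (Finset.mem_filter.2 ⟨ht, rfl⟩)⟩

lemma marg_nonneg (hP0 : ∀ t ∈ R, 0 ≤ P t) (W : Finset A) (w : A → Option α) :
    0 ≤ marg P R W w :=
  Finset.sum_nonneg fun t ht => hP0 t (Finset.mem_filter.1 ht).1

lemma sum_marg_mul (P : (A → α) → ℝ) (R : Finset (A → α)) (W : Finset A)
    (f : (A → Option α) → ℝ) :
    ∑ w ∈ projR W R, marg P R W w * f w = ∑ t ∈ R, P t * f (proj W t) := by
  rw [← Finset.sum_fiberwise_of_maps_to fun t (ht : t ∈ R) => proj_mem_projR W ht]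
  refine Finset.sum_congr rfl fun w _ => ?_
  rw [marg, Finset.sum_mul]
  exact Finset.sum_congr rfl fun t ht => by rw [(Finset.mem_filter.1 ht).2]

lemma sum_marg (P : (A → α) → ℝ) (R : Finset (A → α)) (W : Finset A) :
    ∑ w ∈ projR W R, marg P R W w = ∑ t ∈ R, P t :=
  Finset.sum_fiberwise_of_maps_to (fun _ => proj_mem_projR W) P

lemma marg_union_proj (P : (A → α) → ℝ) (R : Finset (A → α)) (U V : Finset A) (t : A → α) :
    marg P R (U ∪ V) (proj (U ∪ V) t)
      = marg P (R.filter fun s => proj U s = proj U t) V (proj V t) := by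
  simp only [marg, Finset.filter_filter, proj_union_eq_proj_union_iff]

lemma entropy_eq_neg_sum (P : (A → α) → ℝ) (R : Finset (A → α)) (W : Finset A) :
    entropy P R W = -∑ t ∈ R, P t * Real.logb 2 (marg P R W (proj W t)) := by
  rw [entropy, sum_marg_mul P R W fun w => Real.logb 2 (marg P R W w)]

-- `P` is not renormalized on the fibres, which is why `h(U)` is absent from the right-hand side.
lemma entropy_union_eq_sum_entropy_filter (P : (A → α) → ℝ) (R : Finset (A → α))
    (U V : Finset A) :
    entropy P R (U ∪ V)
      = ∑ u ∈ projR U R, entropy P (R.filter fun t => proj U t = u) V := by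
  simp only [entropy_eq_neg_sum, marg_union_proj, Finset.sum_neg_distrib]
  rw [← Finset.sum_fiberwise_of_maps_to fun t (ht : t ∈ R) => proj_mem_projR U ht]
  congr 1
  refine Finset.sum_congr rfl fun u _ => Finset.sum_congr rfl fun t ht => ?_
  rw [(Finset.mem_filter.1 ht).2]

lemma entropy_add_sum_marg_mul_logb_le (hP0 : ∀ t ∈ R, 0 ≤ P t) {W : Finset A}
    {c : (A → Option α) → ℝ} (hc : ∀ w ∈ projR W R, 0 < c w) :
    entropy P R W + ∑ w ∈ projR W R, marg P R W w * Real.logb 2 (c w)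
      ≤ (∑ t ∈ R, P t) * Real.logb 2 ((∑ w ∈ projR W R, c w) / ∑ t ∈ R, P t) := by
  have log_sum := sum_mul_logb_sum_div_sum_le one_lt_two
    (fun w _ => marg_nonneg hP0 W w) (fun w hw => (hc w hw).le)
    (fun w hw hw0 => absurd hw0 (hc w hw).ne')
  have split_logb : ∀ w ∈ projR W R, marg P R W w * Real.logb 2 (marg P R W w / c w)
      = marg P R W w * Real.logb 2 (marg P R W w) - marg P R W w * Real.logb 2 (c w) := by
    intro w hw
    rcases eq_or_ne (marg P R W w) 0 with h0 | h0
    · simp only [h0, zero_mul, sub_zero]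
    · rw [Real.logb_div h0 (hc w hw).ne', mul_sub]
  rw [sum_marg, Finset.sum_congr rfl split_logb, Finset.sum_sub_distrib] at log_sum
  rw [entropy, ← inv_div, Real.logb_inv]
  linarith

lemma entropy_le_mul_logb_card_div (hP0 : ∀ t ∈ R, 0 ≤ P t) (W : Finset A) :
    entropy P R W
      ≤ (∑ t ∈ R, P t) * Real.logb 2 ((projR W R).card / ∑ t ∈ R, P t) := by
  simpa using entropy_add_sum_marg_mul_logb_le hP0 (W := W) (c := 1) fun _ _ => one_pos

lemma entropy_union_sub_entropy_le_sum_marg_mul_logb_deg (hP0 : ∀ t ∈ R, 0 ≤ P t)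
    (U V : Finset A) :
    entropy P R (U ∪ V) - entropy P R U
      ≤ ∑ u ∈ projR U R, marg P R U u * Real.logb 2 (deg U V R u) := by
  rw [entropy_union_eq_sum_entropy_filter, entropy, sub_neg_eq_add, ← Finset.sum_add_distrib]
  refine Finset.sum_le_sum fun u hu => ?_
  have fibre_le : entropy P (R.filter fun t => proj U t = u) V
      ≤ marg P R U u * Real.logb 2 (deg U V R u / marg P R U u) :=
    entropy_le_mul_logb_card_div (fun t ht => hP0 t (Finset.mem_filter.1 ht).1) V
  rcases eq_or_ne (marg P R U u) 0 with h0 | h0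
  · simpa only [h0, zero_mul, add_zero] using fibre_le
  · have hd : (deg U V R u : ℝ) ≠ 0 := Nat.cast_ne_zero.2 (deg_pos V hu).ne'
    rw [Real.logb_div hd h0] at fibre_le
    linarith

lemma sum_marg_mul_logb_deg_le_logb_lpNorm_top (hP0 : ∀ t ∈ R, 0 ≤ P t)
    (hP1 : ∑ t ∈ R, P t = 1) (U V : Finset A) :
    ∑ u ∈ projR U R, marg P R U u * Real.logb 2 (deg U V R u)
      ≤ Real.logb 2 (lpNorm U V R ⊤) := by
  have logb_deg_le : ∀ u ∈ projR U R,
      Real.logb 2 (deg U V R u) ≤ Real.logb 2 (lpNorm U V R ⊤) := by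
    intro u hu
    refine Real.logb_le_logb_of_le one_lt_two (Nat.cast_pos.2 (deg_pos V hu)) ?_
    rw [lpNorm, if_pos rfl]
    exact Nat.cast_le.2 (Finset.le_sup (f := deg U V R) hu)
  calc ∑ u ∈ projR U R, marg P R U u * Real.logb 2 (deg U V R u)
      ≤ ∑ u ∈ projR U R, marg P R U u * Real.logb 2 (lpNorm U V R ⊤) :=
        Finset.sum_le_sum fun u hu =>
          mul_le_mul_of_nonneg_left (logb_deg_le u hu) (marg_nonneg hP0 U u)
    _ = Real.logb 2 (lpNorm U V R ⊤) := by rw [← Finset.sum_mul, sum_marg, hP1, one_mul]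

lemma entropy_add_mul_sum_marg_mul_logb_deg_le (hP0 : ∀ t ∈ R, 0 ≤ P t)
    (hP1 : ∑ t ∈ R, P t = 1) (U V : Finset A) (q : ℝ) :
    entropy P R U + q * ∑ u ∈ projR U R, marg P R U u * Real.logb 2 (deg U V R u)
      ≤ Real.logb 2 (∑ u ∈ projR U R, (deg U V R u : ℝ) ^ q) := by
  have hd : ∀ u ∈ projR U R, (0 : ℝ) < deg U V R u := fun u hu => Nat.cast_pos.2 (deg_pos V hu)
  have gibbs := entropy_add_sum_marg_mul_logb_le hP0 fun u hu => Real.rpow_pos_of_pos (hd u hu) q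
  rw [hP1, one_mul, div_one] at gibbs
  convert gibbs using 2
  rw [Finset.mul_sum]
  refine Finset.sum_congr rfl fun u hu => ?_
  rw [Real.logb_rpow_eq_mul_logb_of_pos (hd u hu), mul_left_comm]

lemma logb_lpNorm_of_ne_top (hR : R.Nonempty) (U V : Finset A) {p : ℝ≥0∞} (hp : p ≠ ⊤) :
    Real.logb 2 (lpNorm U V R p)
      = (1 / p.toReal) * Real.logb 2 (∑ u ∈ projR U R, (deg U V R u : ℝ) ^ p.toReal) := by
  rw [lpNorm, if_neg hp, Real.logb_rpow_eq_mul_logb_of_pos]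
  exact Finset.sum_pos (fun u hu => Real.rpow_pos_of_pos (Nat.cast_pos.2 (deg_pos V hu)) _)
    (hR.image _)

end Entropy

/-- For a nonempty finite relation `R`, a probability distribution `P` on the
tuples of `R` with entropic vector `h = entropy P R ·`, all attribute sets `U, V` and all
`p ∈ (0, ∞]` we have `(1/p)·h(U) + h(V|U) ≤ log₂ ‖deg_R(V|U)‖_p`. -/
theorem lp_degree_entropy_bound {A α : Type*} [Fintype A] [DecidableEq A] [DecidableEq α]
    (R : Finset (A → α)) (hR : R.Nonempty)
    (P : (A → α) → ℝ) (hP0 : ∀ t ∈ R, 0 ≤ P t) (hP1 : ∑ t ∈ R, P t = 1)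
    (U V : Finset A) (p : ℝ≥0∞) (hp : 0 < p) :
    (1 / p).toReal * entropy P R U + (entropy P R (U ∪ V) - entropy P R U)
      ≤ Real.logb 2 (lpNorm U V R p) := by
  have cond_le := entropy_union_sub_entropy_le_sum_marg_mul_logb_deg hP0 U V
  rcases eq_or_ne p ⊤ with rfl | hp_top
  · rw [one_div, ENNReal.inv_top, ENNReal.toReal_zero, zero_mul, zero_add]
    exact cond_le.trans (sum_marg_mul_logb_deg_le_logb_lpNorm_top hP0 hP1 U V)
  · have hq : 0 < p.toReal := ENNReal.toReal_pos hp.ne' hp_top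
    rw [logb_lpNorm_of_ne_top hR U V hp_top, one_div, ENNReal.toReal_inv, one_div]
    calc p.toReal⁻¹ * entropy P R U + (entropy P R (U ∪ V) - entropy P R U)
        ≤ p.toReal⁻¹ * entropy P R U
            + ∑ u ∈ projR U R, marg P R U u * Real.logb 2 (deg U V R u) := by gcongr
      _ = p.toReal⁻¹ * (entropy P R U
            + p.toReal * ∑ u ∈ projR U R, marg P R U u * Real.logb 2 (deg U V R u)) := by
          rw [mul_add, inv_mul_cancel_left₀ hq.ne']
      _ ≤ p.toReal⁻¹ * Real.logb 2 (∑ u ∈ projR U R, (deg U V R u : ℝ) ^ p.toReal) := by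
          gcongr
          exact entropy_add_mul_sum_marg_mul_logb_deg_le hP0 hP1 U V p.toReal

end JoinBounds
end

section
/- Let X be an n-element variable set, let Σ = {τ_1, …, τ_s} be a set of abstract statistics over X, and let b ∈ ℝ^s with b_i > 0 for all i. Let K ⊆ ℝ^{2^X} be a topologically closed convex cone with N_n ⊆ K ⊆ Γ_n. Then Log-U-Bound_K(Σ, b) = Log-L-Bound_K(Σ, b). -/
open scoped BigOperators ENNReal

namespace JoinBounds

noncomputable section

variable {A : Type*}

/-- `h(τ)` for the abstract statistics `τ = ((V|U), p)`:
`(1/p)·h(U) + h(V|U)` where `h(V|U) = h(U ∪ V) - h(U)` and `1/∞ = 0`. -/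
def statVal [DecidableEq A] (h : Finset A → ℝ) (U V : Finset A) (p : ℝ≥0∞) : ℝ :=
  (1 / p).toReal * h U + (h (U ∪ V) - h U)

/-- A polymatroid on the variable set `A`. -/
def IsPolymatroid [DecidableEq A] (h : Finset A → ℝ) : Prop :=
  h ∅ = 0 ∧ (∀ U V : Finset A, U ⊆ V → h U ≤ h V) ∧
    ∀ U V : Finset A, h U + h V ≥ h (U ∪ V) + h (U ∩ V)

/-- The set `Γ_n` of polymatroids. -/
def Gamma (A : Type*) [DecidableEq A] : Set (Finset A → ℝ) := {h | IsPolymatroid h}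

/-- The step function `h^W`. -/
def stepFn [DecidableEq A] (W : Finset A) : Finset A → ℝ :=
  fun U => if (U ∩ W).Nonempty then 1 else 0

/-- The set `N_n` of normal polymatroids: nonnegative linear combinations of step functions. -/
def Normal (A : Type*) [Fintype A] [DecidableEq A] : Set (Finset A → ℝ) :=
  {h | ∃ α : Finset A → ℝ, (∀ W, 0 ≤ α W) ∧ h = ∑ W : Finset A, α W • stepFn W}

/-- `Log-U-Bound_K(Σ, b)`: the infimum of `∑ i, w i * b i` over all nonnegative `w` such that the
`Σ`-inequality `∑ i, w i * h(τ i) ≥ h(X)` is valid for all `h ∈ K` (an `EReal`; `⊤` if no valid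
inequality exists). -/
def LogUBound [Fintype A] [DecidableEq A] (K : Set (Finset A → ℝ)) (s : ℕ)
    (U V : Fin s → Finset A) (p : Fin s → ℝ≥0∞) (b : Fin s → ℝ) : EReal :=
  sInf {r : EReal | ∃ w : Fin s → ℝ, (∀ i, 0 ≤ w i) ∧
    (∀ h ∈ K, ∑ i, w i * statVal h (U i) (V i) (p i) ≥ h Finset.univ) ∧
    r = ((∑ i, w i * b i : ℝ) : EReal)}

/-- `Log-L-Bound_K(Σ, b)`: the supremum of `h(X)` over all `h ∈ K` satisfying the
log-statistics `h(τ i) ≤ b i` (an `EReal`). -/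
def LogLBound [Fintype A] [DecidableEq A] (K : Set (Finset A → ℝ)) (s : ℕ)
    (U V : Fin s → Finset A) (p : Fin s → ℝ≥0∞) (b : Fin s → ℝ) : EReal :=
  sSup {r : EReal | ∃ h ∈ K, (∀ i, statVal h (U i) (V i) (p i) ≤ b i) ∧
    r = ((h Finset.univ : ℝ) : EReal)}

end

end JoinBounds

/-!
The two bounds are the values of a conic program and its dual, and strong duality follows from
Slater's condition. Let `M` bound the primal value from above. The convex set of pairs `(y, t)` with
`y < b` and `t > M` is open, so it can be separated from the image of the cone under
`x ↦ (g x, φ x)`. The separating functional has coefficients `(w, -μ)` with `w, μ ≥ 0`; Slater's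
condition rules out `μ = 0`, and `w / μ` is then dual feasible with value at most `M`. For `b > 0`
the zero vector is a Slater point for the log-bounds.
-/

namespace JoinBounds

section OrderedField

variable {𝕜 ι E : Type*} [Field 𝕜] [LinearOrder 𝕜] [IsStrictOrderedRing 𝕜]
  [AddCommGroup E] [Module 𝕜 E]

theorem exists_convexCone_coe_eq {K : Set E} (hconvex : Convex 𝕜 K)
    (hcone : ∀ c : 𝕜, 0 < c → ∀ x ∈ K, c • x ∈ K) : ∃ C : ConvexCone 𝕜 E, (C : Set E) = K := by
  refine ⟨⟨K, fun c hc x hx => hcone c hc x hx, fun x hx y hy => ?_⟩, rfl⟩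
  have hmid : (2⁻¹ : 𝕜) • x + (2⁻¹ : 𝕜) • y ∈ K :=
    hconvex hx hy (by norm_num) (by norm_num) (by norm_num)
  simpa [smul_smul] using hcone 2 two_pos _ hmid

theorem nonpos_of_forall_le_pos_mul {u a : 𝕜} (h : ∀ c > 0, u ≤ c * a) : u ≤ 0 := by
  by_contra! hu
  have ha : 0 < a := by linarith [h 1 one_pos]
  have hhalf := h (u / (2 * a)) (by positivity)
  have hcancel : u / (2 * a) * a = u / 2 := by field_simp
  linarith

theorem nonneg_of_forall_le_pos_mul {u a : 𝕜} (h : ∀ c > 0, u ≤ c * a) : 0 ≤ a := by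
  by_contra! ha
  have hlarge := h ((|u| + 1) / -a) (div_pos (by positivity) (by linarith))
  have hcancel : (|u| + 1) / -a * a = -(|u| + 1) := by
    rw [div_neg, neg_mul, div_mul_cancel₀ _ ha.ne]
  linarith [neg_abs_le u]

theorem nonneg_of_forall_sum_sub_mul_le [Fintype ι] {w b : ι → 𝕜} {μ M u : 𝕜}
    (h : ∀ y ≤ b, ∀ t ≥ M, ∑ i, w i * y i - μ * t ≤ u) : (∀ i, 0 ≤ w i) ∧ 0 ≤ μ := by
  classical
  constructor
  · intro i
    refine nonneg_of_forall_le_pos_mul (u := ∑ j, w j * b j - μ * M - u) fun c hc => ?_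
    have hshift := h (b - Pi.single i c) (sub_le_self b (Pi.single_nonneg.2 hc.le)) M le_rfl
    have hsum : ∑ j, w j * (b - Pi.single i c : ι → 𝕜) j = ∑ j, w j * b j - w i * c := by
      simp [mul_sub, Finset.sum_sub_distrib, Pi.single_apply]
    linarith
  · refine nonneg_of_forall_le_pos_mul (u := ∑ j, w j * b j - μ * M - u) fun c hc => ?_
    linarith [h b le_rfl (M + c) (by linarith)]

theorem nonpos_and_nonneg_of_forall_mem_convexCone_le {C : ConvexCone 𝕜 E}
    (hC : (C : Set E).Nonempty) {f : E →ₗ[𝕜] 𝕜} {u : 𝕜} (h : ∀ x ∈ C, u ≤ f x) :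
    u ≤ 0 ∧ ∀ x ∈ C, 0 ≤ f x := by
  have hscale : ∀ x ∈ C, ∀ c > 0, u ≤ c * f x := fun x hx c hc => by
    simpa using h (c • x) (C.smul_mem hc hx)
  obtain ⟨x₀, hx₀⟩ := hC
  exact ⟨nonpos_of_forall_le_pos_mul (hscale x₀ hx₀),
    fun x hx => nonneg_of_forall_le_pos_mul (hscale x hx)⟩

end OrderedField

section Separation

variable {E : Type*} [AddCommGroup E] [Module ℝ E]

theorem exists_strongDual_neg_nonneg_of_disjoint_convexCone
    [TopologicalSpace E] [IsTopologicalAddGroup E] [ContinuousSMul ℝ E] {D : Set E}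
    {C : ConvexCone ℝ E} (hD_convex : Convex ℝ D) (hD_open : IsOpen D) (hC : (C : Set E).Nonempty)
    (hdisj : Disjoint D C) :
    ∃ f : StrongDual ℝ E, (∀ x ∈ D, f x < 0) ∧ ∀ x ∈ C, 0 ≤ f x := by
  obtain ⟨f, u, hfD, hfC⟩ := geometric_hahn_banach_open hD_convex hD_open C.convex hdisj
  obtain ⟨hu, hfC_nonneg⟩ :=
    nonpos_and_nonneg_of_forall_mem_convexCone_le hC (f := (f : E →ₗ[ℝ] ℝ)) hfC
  exact ⟨f, fun x hx => (hfD x hx).trans_le hu, hfC_nonneg⟩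

theorem exists_apply_eq_sum_sub_mul {R ι : Type*} [CommRing R] [Fintype ι]
    (f : (ι → R) × R →ₗ[R] R) :
    ∃ (w : ι → R) (μ : R), ∀ y t, f (y, t) = ∑ i, w i * y i - μ * t := by
  classical
  refine ⟨fun i => f (fun j => if i = j then 1 else 0, 0), -f (0, 1), fun y t => ?_⟩
  have hfst : f (y, 0) = ∑ i, f (fun j => if i = j then 1 else 0, 0) * y i := by
    simpa [mul_comm] using (f ∘ₗ LinearMap.inl R (ι → R) R).pi_apply_eq_sum_univ y
  have hsnd : f (0, t) = t * f (0, 1) := by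
    simpa using f.map_smul t (0, 1)
  calc f (y, t) = f (y, 0) + f (0, t) := by rw [← map_add]; simp
    _ = ∑ i, f (fun j => if i = j then 1 else 0, 0) * y i - -f (0, 1) * t := by
      rw [hfst, hsnd]; ring

theorem closure_pi_Iio_prod_Ioi {ι α : Type*} [LinearOrder α] [DenselyOrdered α] [NoMinOrder α]
    [NoMaxOrder α] [TopologicalSpace α] [OrderTopology α] (b : ι → α) (M : α) :
    closure ((Set.univ.pi fun i => Set.Iio (b i)) ×ˢ Set.Ioi M) = Set.Iic b ×ˢ Set.Ici M := by
  simp only [closure_prod_eq, closure_pi_set, closure_Iio, closure_Ioi, Set.pi_univ_Iic]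

end Separation

section ConicProgram

variable {ι E : Type*} [AddCommGroup E] [Module ℝ E]

/-- The value of the conic program that maximises `φ` over the points of `K` with `g i ≤ b i` for
all `i`. It is `LogLBound` with arbitrary linear functionals in place of statistics. -/
noncomputable def conicLBound (K : Set E) (g : ι → E →ₗ[ℝ] ℝ) (φ : E →ₗ[ℝ] ℝ) (b : ι → ℝ) :
    EReal :=
  sSup {r : EReal | ∃ x ∈ K, (∀ i, g i x ≤ b i) ∧ r = ((φ x : ℝ) : EReal)}

variable [Fintype ι]

/-- The value of the dual of the program `conicLBound`: the infimum of `∑ i, w i * b i` over the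
multipliers `w ≥ 0` for which `φ ≤ ∑ i, w i * g i` on `K`, with value `⊤` if there are none. It is
`LogUBound` with arbitrary linear functionals in place of statistics. -/
noncomputable def conicUBound (K : Set E) (g : ι → E →ₗ[ℝ] ℝ) (φ : E →ₗ[ℝ] ℝ) (b : ι → ℝ) :
    EReal :=
  sInf {r : EReal | ∃ w : ι → ℝ, (∀ i, 0 ≤ w i) ∧ (∀ x ∈ K, ∑ i, w i * g i x ≥ φ x) ∧
    r = ((∑ i, w i * b i : ℝ) : EReal)}

theorem conicLBound_le_conicUBound (K : Set E) (g : ι → E →ₗ[ℝ] ℝ) (φ : E →ₗ[ℝ] ℝ)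
    (b : ι → ℝ) : conicLBound K g φ b ≤ conicUBound K g φ b := by
  refine sSup_le ?_
  rintro _ ⟨x, hx, hxb, rfl⟩
  refine le_sInf ?_
  rintro _ ⟨w, hw, hφ, rfl⟩
  rw [EReal.coe_le_coe_iff]
  calc φ x ≤ ∑ i, w i * g i x := hφ x hx
    _ ≤ ∑ i, w i * b i := Finset.sum_le_sum fun i _ => mul_le_mul_of_nonneg_left (hxb i) (hw i)

variable {C : ConvexCone ℝ E} {g : ι → E →ₗ[ℝ] ℝ} {φ : E →ₗ[ℝ] ℝ} {b : ι → ℝ} {M : ℝ}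

theorem exists_fritzJohn_multipliers (hC : (C : Set E).Nonempty)
    (hM : ∀ x ∈ C, (∀ i, g i x < b i) → φ x ≤ M) :
    ∃ (w : ι → ℝ) (μ : ℝ), (∀ i, 0 ≤ w i) ∧ 0 ≤ μ ∧ (μ = 0 → w ≠ 0) ∧
      (∀ x ∈ C, μ * φ x ≤ ∑ i, w i * g i x) ∧ ∑ i, w i * b i ≤ μ * M := by
  set D : Set ((ι → ℝ) × ℝ) := (Set.univ.pi fun i => Set.Iio (b i)) ×ˢ Set.Ioi M with hD
  let C' : ConvexCone ℝ ((ι → ℝ) × ℝ) := C.map ((LinearMap.pi g).prod φ)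
  have hD_convex : Convex ℝ D := (convex_pi fun i _ => convex_Iio (b i)).prod (convex_Ioi M)
  have hD_open : IsOpen D :=
    (isOpen_set_pi Set.finite_univ fun _ _ => isOpen_Iio).prod isOpen_Ioi
  have hdisj : Disjoint D C' := by
    rw [Set.disjoint_left]
    rintro _ hxD ⟨x, hx, rfl⟩
    simp only [hD, Set.mem_prod, Set.mem_univ_pi, Set.mem_Iio, Set.mem_Ioi] at hxD
    exact hxD.2.not_ge (hM x hx hxD.1)
  obtain ⟨f, hfD, hfC⟩ :=
    exists_strongDual_neg_nonneg_of_disjoint_convexCone (C := C') hD_convex hD_open (hC.image _)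
      hdisj
  have hf_closure : ∀ y ≤ b, ∀ t ≥ M, f (y, t) ≤ 0 := fun y hy t ht => by
    have hyt : (y, t) ∈ closure D := by rw [hD, closure_pi_Iio_prod_Ioi]; exact ⟨hy, ht⟩
    exact closure_minimal (fun q hq => (hfD q hq).le)
      (isClosed_le f.continuous continuous_const) hyt
  obtain ⟨w, μ, hf⟩ := exists_apply_eq_sum_sub_mul (f : (ι → ℝ) × ℝ →ₗ[ℝ] ℝ)
  simp only [ContinuousLinearMap.coe_coe] at hf
  simp only [hf] at hf_closure
  obtain ⟨hw, hμ⟩ := nonneg_of_forall_sum_sub_mul_le hf_closure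
  refine ⟨w, μ, hw, hμ, ?_, fun x hx => ?_, by linarith [hf_closure b le_rfl M le_rfl]⟩
  · rintro rfl rfl
    have hlt := hfD (b - 1, M + 1) (by simp [hD])
    simp [hf] at hlt
  · have hfx : 0 ≤ f (fun i => g i x, φ x) := hfC _ ⟨x, hx, rfl⟩
    rw [hf] at hfx
    linarith

theorem exists_lagrange_multipliers (hslater : ∃ x ∈ C, ∀ i, g i x < b i)
    (hM : ∀ x ∈ C, (∀ i, g i x < b i) → φ x ≤ M) :
    ∃ w : ι → ℝ, (∀ i, 0 ≤ w i) ∧ (∀ x ∈ C, φ x ≤ ∑ i, w i * g i x) ∧ ∑ i, w i * b i ≤ M := by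
  obtain ⟨x₀, hx₀, hx₀b⟩ := hslater
  obtain ⟨w, μ, hw, hμ, hne, hφ, hb⟩ := exists_fritzJohn_multipliers ⟨x₀, hx₀⟩ hM
  have hμ_ne : μ ≠ 0 := by
    rintro rfl
    obtain ⟨i, hi⟩ := Function.ne_iff.1 (hne rfl)
    have hlt : ∑ i, w i * g i x₀ < ∑ i, w i * b i :=
      Finset.sum_lt_sum (fun j _ => mul_le_mul_of_nonneg_left (hx₀b j).le (hw j))
        ⟨i, Finset.mem_univ i, mul_lt_mul_of_pos_left (hx₀b i) ((hw i).lt_of_ne' hi)⟩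
    linarith [hφ x₀ hx₀]
  have hμ_pos : 0 < μ := hμ.lt_of_ne' hμ_ne
  have hsum : ∀ y : ι → ℝ, ∑ i, w i / μ * y i = (∑ i, w i * y i) / μ := fun y => by
    rw [Finset.sum_div]
    exact Finset.sum_congr rfl fun i _ => div_mul_eq_mul_div _ _ _
  refine ⟨fun i => w i / μ, fun i => div_nonneg (hw i) hμ, fun x hx => ?_, ?_⟩
  · rw [hsum, le_div_iff₀' hμ_pos]
    exact hφ x hx
  · rw [hsum, div_le_iff₀' hμ_pos]
    exact hb

theorem logUBound_eq_logLBound_general (C : ConvexCone ℝ E) (g : ι → E →ₗ[ℝ] ℝ)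
    (φ : E →ₗ[ℝ] ℝ) (hslater : ∃ x ∈ C, ∀ i, g i x < b i) :
    conicUBound C g φ b = conicLBound C g φ b := by
  refine le_antisymm (EReal.le_of_forall_lt_iff_le.1 fun M hM => ?_)
    (conicLBound_le_conicUBound _ g φ b)
  have hφM : ∀ x ∈ C, (∀ i, g i x < b i) → φ x ≤ M := fun x hx hxb =>
    have hx_le : ((φ x : ℝ) : EReal) ≤ conicLBound C g φ b :=
      le_sSup ⟨x, hx, fun i => (hxb i).le, rfl⟩
    EReal.coe_le_coe_iff.1 (hx_le.trans hM.le)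
  obtain ⟨w, hw, hφ, hwM⟩ := exists_lagrange_multipliers hslater hφM
  calc conicUBound C g φ b ≤ ((∑ i, w i * b i : ℝ) : EReal) :=
        sInf_le ⟨w, hw, hφ, rfl⟩
    _ ≤ M := EReal.coe_le_coe_iff.2 hwM

end ConicProgram

section Polymatroid

variable {A : Type*} [DecidableEq A]

/-- `statVal` as a linear functional of `h`. -/
noncomputable def statValₗ (U V : Finset A) (p : ℝ≥0∞) : (Finset A → ℝ) →ₗ[ℝ] ℝ where
  toFun h := statVal h U V p
  map_add' h k := by simp only [statVal, Pi.add_apply]; ring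
  map_smul' c h := by simp only [statVal, Pi.smul_apply, smul_eq_mul, RingHom.id_apply]; ring

theorem zero_mem_normal [Fintype A] : (0 : Finset A → ℝ) ∈ Normal A :=
  ⟨0, fun _ => le_rfl, by simp⟩

end Polymatroid

/-- **duality theorem.** For any topologically closed convex cone `K` with
`N_n ⊆ K ⊆ Γ_n`, and any set of abstract statistics with positive log-statistics `b`,
`Log-U-Bound_K(Σ, b) = Log-L-Bound_K(Σ, b)`. -/
theorem logUBound_eq_logLBound {A : Type*} [Fintype A] [DecidableEq A]
    (s : ℕ) (U V : Fin s → Finset A) (p : Fin s → ℝ≥0∞) (hp : ∀ i, 0 < p i)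
    (b : Fin s → ℝ) (hb : ∀ i, 0 < b i)
    (K : Set (Finset A → ℝ)) (hclosed : IsClosed K) (hconvex : Convex ℝ K)
    (hcone : ∀ (c : ℝ), 0 ≤ c → ∀ h ∈ K, c • h ∈ K)
    (hNK : Normal A ⊆ K) (hKG : K ⊆ Gamma A) :
    LogUBound K s U V p b = LogLBound K s U V p b := by
  obtain ⟨C, rfl⟩ := exists_convexCone_coe_eq hconvex fun c hc => hcone c hc.le
  exact logUBound_eq_logLBound_general C (fun i => statValₗ (U i) (V i) (p i))
    (LinearMap.proj Finset.univ) ⟨0, hNK zero_mem_normal, fun i => (map_zero _).trans_lt (hb i)⟩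

end JoinBounds
end

section
/- Let n ≥ 3 and let p ≥ 2 be a real number. For every polymatroid h on the variable set {X_1, …, X_n}: (p−2)·h(X_1X_2) + (h(X_2) + 2·h(X_1|X_2)) + ∑_{i=2}^{n−2} (h(X_i) + (p−1)·h(X_{i+1}|X_i)) + (h(X_{n−1}) + p·h(X_n|X_{n−1})) ≥ p·h(X_1⋯X_n). -/
open scoped BigOperators

namespace JoinBounds

/-- A polymatroid on the variable set `X ⊆ ℕ` (a set function constrained only on
subsets of `X`). -/
def IsPolymatroidOn (X : Finset ℕ) (h : Finset ℕ → ℝ) : Prop :=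
  h ∅ = 0 ∧ (∀ U V : Finset ℕ, U ⊆ V → V ⊆ X → h U ≤ h V) ∧
    ∀ U V : Finset ℕ, U ⊆ X → V ⊆ X → h U + h V ≥ h (U ∪ V) + h (U ∩ V)

/-!
Consider the potential `Φ m = p * h (X₁⋯Xₘ) - h Xₘ`. Conditioning on fewer variables increases `h`,
so passing from `m` to `m + 1` raises the first term by at most `p * h (Xₘ₊₁|Xₘ)`; one of these `p`
copies is paid for by `h (XₘXₘ₊₁) ≤ h Xₘ + h Xₘ₊₁`, so that `Φ (m + 1) - Φ m` is at most the `m`-th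
summand `h Xₘ + (p - 1) * h (Xₘ₊₁|Xₘ)`. Telescoping from `2` to `n - 1` and bounding the last
variable directly by `p * h (Xₙ|Xₙ₋₁)` gives the inequality.
-/

section Submodular

open Finset

variable {α R : Type*} [DecidableEq α]

/-- Submodularity of a set function `h` on the subsets of `X`; as in `IsPolymatroidOn`, the values
of `h` on other sets are unconstrained. -/
def IsSubmodularOn [Add R] [LE R] (X : Finset α) (h : Finset α → R) : Prop :=
  ∀ U V : Finset α, U ⊆ X → V ⊆ X → h (U ∪ V) + h (U ∩ V) ≤ h U + h V

namespace IsSubmodularOn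

variable [AddCommGroup R] [PartialOrder R] [IsOrderedAddMonoid R] {X : Finset α} {h : Finset α → R}

theorem union_le_add (hsub : IsSubmodularOn X h) (h_empty : 0 ≤ h ∅) {U V : Finset α}
    (hU : U ⊆ X) (hV : V ⊆ X) (hUV : Disjoint U V) : h (U ∪ V) ≤ h U + h V := by
  have key := hsub U V hU hV
  rw [disjoint_iff_inter_eq_empty.mp hUV] at key
  exact (le_add_of_nonneg_right h_empty).trans key

theorem pair_le_add (hsub : IsSubmodularOn X h) (h_empty : 0 ≤ h ∅) {a b : α}
    (ha : a ∈ X) (hb : b ∈ X) (hab : a ≠ b) : h {a, b} ≤ h {a} + h {b} :=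
  hsub.union_le_add h_empty (singleton_subset_iff.mpr ha) (singleton_subset_iff.mpr hb)
    (disjoint_singleton.mpr hab)

theorem insert_sub_le_insert_sub (hsub : IsSubmodularOn X h) {A U : Finset α} {b : α}
    (hAU : A ⊆ U) (hb : b ∉ U) (hX : insert b U ⊆ X) :
    h (insert b U) - h U ≤ h (insert b A) - h A := by
  have key := hsub U (insert b A) ((subset_insert b U).trans hX)
    ((insert_subset_insert b hAU).trans hX)
  rw [union_insert, union_eq_left.mpr hAU, inter_insert_of_notMem hb, inter_eq_right.mpr hAU] at key
  rwa [sub_le_iff_le_add, sub_add_eq_add_sub, le_sub_iff_add_le, add_comm (h (insert b A))]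

variable {n m : ℕ} {x : ℕ → α}

theorem image_Icc_succ_sub_le (hsub : IsSubmodularOn ((Icc 1 n).image x) h)
    (hx : Set.InjOn x (Icc 1 n)) (hm : 1 ≤ m) (hmn : m + 1 ≤ n) :
    h ((Icc 1 (m + 1)).image x) - h ((Icc 1 m).image x) ≤ h {x m, x (m + 1)} - h {x m} := by
  have h_insert : insert (x (m + 1)) ((Icc 1 m).image x) = (Icc 1 (m + 1)).image x := by
    rw [← image_insert, insert_Icc_right_eq_Icc_add_one (by lia)]
  have h_mem : m + 1 ∈ Icc 1 n := mem_Icc.mpr ⟨by lia, hmn⟩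
  have h_new : x (m + 1) ∉ (Icc 1 m).image x := by
    rw [mem_image]
    rintro ⟨i, hi, hxi⟩
    have hi_eq : i = m + 1 := hx (Icc_subset_Icc_right (by lia) hi) h_mem hxi
    exact m.not_succ_le_self (hi_eq.ge.trans (mem_Icc.mp hi).2)
  rw [← h_insert, pair_comm]
  refine hsub.insert_sub_le_insert_sub ?_ h_new ?_
  · exact singleton_subset_iff.mpr (mem_image_of_mem x (mem_Icc.mpr ⟨hm, le_rfl⟩))
  · exact h_insert ▸ image_subset_image (Icc_subset_Icc_right hmn)

end IsSubmodularOn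

theorem IsPolymatroidOn.isSubmodularOn {X : Finset ℕ} {h : Finset ℕ → ℝ}
    (hpoly : IsPolymatroidOn X h) : IsSubmodularOn X h :=
  hpoly.2.2

end Submodular

section Path

open Finset

/-- The potential `p * h (X₁ ⋯ Xₘ) - h Xₘ` of the path `X i = x i`, whose increments are
dominated by the summands of the path inequality. -/
def pathPotential {α R : Type*} [DecidableEq α] [Ring R] (p : R) (h : Finset α → R)
    (x : ℕ → α) (m : ℕ) : R :=
  p * h ((Icc 1 m).image x) - h {x m}

variable {α R : Type*} [DecidableEq α] [CommRing R] [LinearOrder R] [IsStrictOrderedRing R]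
  {n m : ℕ} {x : ℕ → α} {h : Finset α → R} {p : R}

theorem pathPotential_succ_sub_le (hp : 0 ≤ p) (hsub : IsSubmodularOn ((Icc 1 n).image x) h)
    (h_empty : 0 ≤ h ∅) (hx : Set.InjOn x (Icc 1 n)) (hm : 1 ≤ m) (hmn : m + 1 ≤ n) :
    pathPotential p h x (m + 1) - pathPotential p h x m ≤
      h {x m} + (p - 1) * (h {x m, x (m + 1)} - h {x m}) := by
  have h_step := mul_le_mul_of_nonneg_left (hsub.image_Icc_succ_sub_le hx hm hmn) hp
  have h_mem : m ∈ Icc 1 n := mem_Icc.mpr ⟨hm, by lia⟩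
  have h_mem_succ : m + 1 ∈ Icc 1 n := mem_Icc.mpr ⟨by lia, hmn⟩
  have h_pair := hsub.pair_le_add h_empty (mem_image_of_mem x h_mem)
    (mem_image_of_mem x h_mem_succ) (hx.ne h_mem h_mem_succ m.lt_succ_self.ne)
  unfold pathPotential
  linarith

theorem pathPotential_sub_le_sum (hp : 0 ≤ p) (hsub : IsSubmodularOn ((Icc 1 n).image x) h)
    (h_empty : 0 ≤ h ∅) (hx : Set.InjOn x (Icc 1 n)) {l : ℕ} (hl : 1 ≤ l) (hlm : l ≤ m)
    (hmn : m ≤ n) :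
    pathPotential p h x m - pathPotential p h x l ≤
      ∑ i ∈ Ico l m, (h {x i} + (p - 1) * (h {x i, x (i + 1)} - h {x i})) := by
  rw [← sum_Ico_sub (pathPotential p h x) hlm]
  refine sum_le_sum fun i hi ↦ ?_
  rw [mem_Ico] at hi
  exact pathPotential_succ_sub_le hp hsub h_empty hx (by lia) (by lia)

theorem path_inequality_general (hn : 3 ≤ n) (hp : 0 ≤ p) (hx : Set.InjOn x (Icc 1 n))
    (hsub : IsSubmodularOn ((Icc 1 n).image x) h) (h_empty : 0 ≤ h ∅) :
    (p - 2) * h {x 1, x 2} + (h {x 2} + 2 * (h {x 1, x 2} - h {x 2}))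
      + (∑ i ∈ Icc 2 (n - 2), (h {x i} + (p - 1) * (h {x i, x (i + 1)} - h {x i})))
      + (h {x (n - 1)} + p * (h {x (n - 1), x n} - h {x (n - 1)}))
      ≥ p * h ((Icc 1 n).image x) := by
  obtain ⟨m, rfl⟩ : ∃ m, n = m + 1 := ⟨n - 1, by lia⟩
  have h_range : Icc 2 (m + 1 - 2) = Ico 2 m := by ext i; simp only [mem_Icc, mem_Ico]; lia
  have h_first : (Icc 1 2).image x = {x 1, x 2} := by
    rw [show Icc 1 2 = {1, 2} from rfl, image_insert, image_singleton]
  have h_telescope := pathPotential_sub_le_sum hp hsub h_empty hx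
    one_le_two (show 2 ≤ m by lia) m.le_succ
  have h_last := mul_le_mul_of_nonneg_left
    (hsub.image_Icc_succ_sub_le hx (show 1 ≤ m by lia) le_rfl) hp
  unfold pathPotential at h_telescope
  rw [h_first] at h_telescope
  rw [h_range, Nat.add_sub_cancel]
  linarith

end Path

/-- **path inequality.** For `n ≥ 3`, real `p ≥ 2`, and every polymatroid `h`
on the variables `X_1, …, X_n` (encoded as `1, …, n : ℕ`):
`(p−2)·h(X_1X_2) + (h(X_2) + 2·h(X_1|X_2)) + ∑_{i=2}^{n−2} (h(X_i) + (p−1)·h(X_{i+1}|X_i))`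
`+ (h(X_{n−1}) + p·h(X_n|X_{n−1})) ≥ p·h(X_1⋯X_n)`. -/
theorem path_inequality (n : ℕ) (hn : 3 ≤ n) (p : ℝ) (hp : 2 ≤ p)
    (h : Finset ℕ → ℝ) (hpoly : IsPolymatroidOn (Finset.Icc 1 n) h) :
    (p - 2) * h {1, 2} + (h {2} + 2 * (h {1, 2} - h {2}))
      + (∑ i ∈ Finset.Icc 2 (n - 2), (h {i} + (p - 1) * (h {i, i + 1} - h {i})))
      + (h {n - 1} + p * (h {n - 1, n} - h {n - 1}))
      ≥ p * h (Finset.Icc 1 n) := by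
  have hsub : IsSubmodularOn ((Finset.Icc 1 n).image id) h := by
    simpa only [Finset.image_id] using hpoly.isSubmodularOn
  simpa only [Finset.image_id, id_eq] using
    path_inequality_general hn (zero_le_two.trans hp) Function.injective_id.injOn hsub hpoly.1.ge

end JoinBounds
end

section
/- Let p ≥ 1 and let q be an integer with 1 ≤ q ≤ p. For every polymatroid h on the variable set {X_0, X_1, …, X_p}: ∑_{i=0}^{p} (h(X_i) + q·h(X_{(i+1) mod (p+1)} | X_i)) ≥ (q+1)·h(X_0X_1⋯X_p). -/
open scoped BigOperators

namespace JoinBounds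

/-!
Walking once around the cycle from a variable `X_i` reaches every variable in `p` steps. The chain
rule, with the conditioning at each step weakened to the previous variable alone, bounds
`h(X_0⋯X_p)` by `h(X_i)` plus the `p` conditional terms met on the way. Summing over the starting
points `i` gives the inequality for `q = p`; subadditivity is the case `q = 0`. Both sides are
affine in `q`, so the inequality holds for every real `q` in between.
-/

section Polymatroid

variable {α : Type*} [DecidableEq α]

/-- A polymatroid on a finite set `X` of variables from an arbitrary type. As in `IsPolymatroidOn`,
which is the case of natural numbers, `h` is defined on all finite sets but constrained only on
subsets of `X`. -/
structure IsPolymatroid_s14 (X : Finset α) (h : Finset α → ℝ) : Prop where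
  map_empty : h ∅ = 0
  mono : ∀ ⦃U V⦄, U ⊆ V → V ⊆ X → h U ≤ h V
  submodular : ∀ ⦃U V⦄, U ⊆ X → V ⊆ X → h (U ∪ V) + h (U ∩ V) ≤ h U + h V

/-- The conditional term `h(V|U)` of a set function, in which the two sets may overlap. -/
def condTerm (h : Finset α → ℝ) (V U : Finset α) : ℝ :=
  h (U ∪ V) - h U

namespace IsPolymatroid_s14

variable {X : Finset α} {h : Finset α → ℝ}

theorem condTerm_anti_right (hh : IsPolymatroid_s14 X h) {U U' V : Finset α} (hU : U ⊆ U')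
    (hU' : U' ⊆ X) (hV : V ⊆ X) : condTerm h V U' ≤ condTerm h V U := by
  have hsub := hh.submodular hU' (Finset.union_subset (hU.trans hU') hV)
  have hmono : h U ≤ h (U' ∩ (U ∪ V)) :=
    hh.mono (Finset.subset_inter hU Finset.subset_union_left) (Finset.inter_subset_left.trans hU')
  rw [← Finset.union_assoc, Finset.union_eq_left.2 hU] at hsub
  unfold condTerm
  linarith

theorem le_sum_singleton (hh : IsPolymatroid_s14 X h) {s : Finset α} (hs : s ⊆ X) :
    h s ≤ ∑ i ∈ s, h {i} := by
  induction s using Finset.induction_on with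
  | empty => simp [hh.map_empty]
  | insert a s ha ih =>
    obtain ⟨haX, hsX⟩ := Finset.insert_subset_iff.1 hs
    have hcond : condTerm h {a} s ≤ condTerm h {a} ∅ :=
      hh.condTerm_anti_right (Finset.empty_subset s) hsX (Finset.singleton_subset_iff.2 haX)
    simp only [condTerm, hh.map_empty, Finset.empty_union, sub_zero] at hcond
    rw [Finset.sum_insert ha, ← Finset.union_singleton]
    linarith [ih hsX]

theorem le_add_sum_condTerm_of_walk (hh : IsPolymatroid_s14 X h) {x : ℕ → α} (hx : ∀ j, x j ∈ X)
    (k : ℕ) :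
    h ((Finset.range (k + 1)).image x) ≤
      h {x 0} + ∑ j ∈ Finset.range k, condTerm h {x (j + 1)} {x j} := by
  induction k with
  | zero => simp
  | succ k ih =>
    have hcond : condTerm h {x (k + 1)} ((Finset.range (k + 1)).image x) ≤
        condTerm h {x (k + 1)} {x k} :=
      hh.condTerm_anti_right
        (Finset.singleton_subset_iff.2 (Finset.mem_image_of_mem x (Finset.self_mem_range_succ k)))
        (Finset.image_subset_iff.2 fun j _ => hx j) (Finset.singleton_subset_iff.2 (hx (k + 1)))
    have himage : (Finset.range (k + 1 + 1)).image x =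
        (Finset.range (k + 1)).image x ∪ {x (k + 1)} := by
      rw [Finset.range_add_one, Finset.image_insert, Finset.union_singleton]
    rw [himage, Finset.sum_range_succ]
    unfold condTerm at hcond ih ⊢
    linarith

end IsPolymatroid_s14

end Polymatroid

section Cycle

open Equiv.Perm

variable {α : Type*} {X : Finset α} {σ : Equiv.Perm α}

theorem image_pow_apply_range_card [DecidableEq α] (hσ : σ.IsCycleOn X) {i : α} (hi : i ∈ X) :
    (Finset.range X.card).image (fun j => (σ ^ j) i) = X := by
  ext a
  simp only [Finset.mem_image, Finset.mem_range]
  constructor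
  · rintro ⟨j, -, rfl⟩
    exact (hσ.1.perm_pow j).mapsTo hi
  · exact hσ.exists_pow_eq hi

theorem sum_comp_pow_apply {M : Type*} [AddCommMonoid M] (hσ : Set.BijOn σ X X) (f : α → M)
    (j : ℕ) : ∑ i ∈ X, f ((σ ^ j) i) = ∑ i ∈ X, f i :=
  have hbij := hσ.perm_pow j
  Finset.sum_nbij ⇑(σ ^ j) hbij.mapsTo hbij.injOn hbij.surjOn fun _ _ => rfl

variable [DecidableEq α] {h : Finset α → ℝ}

theorem IsPolymatroid_s14.card_mul_le_of_isCycleOn (hh : IsPolymatroid_s14 X h) (hσ : σ.IsCycleOn X) :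
    X.card * h X ≤ ∑ i ∈ X, h {i} + (X.card - 1) * ∑ i ∈ X, condTerm h {σ i} {i} := by
  rcases X.eq_empty_or_nonempty with rfl | hX
  · simp
  have hwalk : ∀ i ∈ X, h X ≤
      h {i} + ∑ j ∈ Finset.range (X.card - 1), condTerm h {σ ((σ ^ j) i)} {(σ ^ j) i} := by
    intro i hi
    have hle := hh.le_add_sum_condTerm_of_walk (x := fun j => (σ ^ j) i)
      (fun j => (hσ.1.perm_pow j).mapsTo hi) (X.card - 1)
    rw [Nat.sub_add_cancel hX.card_pos, image_pow_apply_range_card hσ hi] at hle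
    simpa only [pow_zero, one_apply, pow_succ', mul_apply] using hle
  calc X.card * h X = ∑ _i ∈ X, h X := by rw [Finset.sum_const, nsmul_eq_mul]
    _ ≤ ∑ i ∈ X, (h {i} +
          ∑ j ∈ Finset.range (X.card - 1), condTerm h {σ ((σ ^ j) i)} {(σ ^ j) i}) :=
        Finset.sum_le_sum hwalk
    _ = ∑ i ∈ X, h {i} +
          ∑ j ∈ Finset.range (X.card - 1), ∑ i ∈ X, condTerm h {σ ((σ ^ j) i)} {(σ ^ j) i} := by
        rw [Finset.sum_add_distrib, Finset.sum_comm]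
    _ = ∑ i ∈ X, h {i} +
          ∑ _j ∈ Finset.range (X.card - 1), ∑ i ∈ X, condTerm h {σ i} {i} := by
        simp only [sum_comp_pow_apply hσ.1 fun i => condTerm h {σ i} {i}]
    _ = ∑ i ∈ X, h {i} + (X.card - 1) * ∑ i ∈ X, condTerm h {σ i} {i} := by
        rw [Finset.sum_const, Finset.card_range, nsmul_eq_mul, Nat.cast_pred hX.card_pos]

theorem cycle_inequality_general (hh : IsPolymatroid_s14 X h) (hσ : σ.IsCycleOn X) {q : ℝ}
    (hq : 0 ≤ q) (hqX : q + 1 ≤ X.card) :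
    (q + 1) * h X ≤ ∑ i ∈ X, (h {i} + q * condTerm h {σ i} {i}) := by
  have hzero := hh.le_sum_singleton subset_rfl
  have hmax := hh.card_mul_le_of_isCycleOn hσ
  rw [Finset.sum_add_distrib, ← Finset.mul_sum]
  set A := ∑ i ∈ X, h {i}
  set B := ∑ i ∈ X, condTerm h {σ i} {i}
  rcases le_total (h X) B with hB | hB
  · linarith [mul_le_mul_of_nonneg_left hB hq]
  · linarith [mul_le_mul_of_nonneg_right hqX (sub_nonneg.2 hB)]

end Cycle

theorem isCycleOn_formPerm_range (n : ℕ) :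
    (List.range n).formPerm.IsCycleOn (Finset.range n : Set ℕ) := by
  convert List.nodup_range.isCycleOn_formPerm using 1
  ext i
  simp

theorem formPerm_range_apply {n i : ℕ} (hi : i < n) :
    (List.range n).formPerm i = (i + 1) % n := by
  simpa only [List.getElem_range, List.length_range] using
    List.formPerm_apply_getElem (List.range n) List.nodup_range i (List.length_range.symm ▸ hi)

/-- **cycle inequality.** For naturals `p ≥ 1` and `1 ≤ q ≤ p`, and every
polymatroid `h` on the variables `X_0, X_1, …, X_p` (encoded as `0, 1, …, p : ℕ`):
`∑_{i=0}^{p} (h(X_i) + q·h(X_{(i+1) mod (p+1)} | X_i)) ≥ (q+1)·h(X_0X_1⋯X_p)`. -/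
theorem cycle_inequality (p q : ℕ) (hp : 1 ≤ p) (hq1 : 1 ≤ q) (hqp : q ≤ p)
    (h : Finset ℕ → ℝ) (hpoly : IsPolymatroidOn (Finset.range (p + 1)) h) :
    (∑ i ∈ Finset.range (p + 1),
        (h {i} + (q : ℝ) * (h {i, (i + 1) % (p + 1)} - h {i})))
      ≥ ((q : ℝ) + 1) * h (Finset.range (p + 1)) := by
  obtain ⟨hempty, hmono, hsub⟩ := hpoly
  have hqcard : (q : ℝ) + 1 ≤ (Finset.range (p + 1)).card := by
    simpa using hqp
  refine (cycle_inequality_general ⟨hempty, hmono, hsub⟩ (isCycleOn_formPerm_range (p + 1))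
    q.cast_nonneg hqcard).trans_eq (Finset.sum_congr rfl fun i hi => ?_)
  rw [formPerm_range_apply (Finset.mem_range.1 hi), condTerm, ← Finset.insert_eq]

end JoinBounds
end

section
/- Let R and S be finite binary relations and let Q = {(x, y, z) : (x, y) ∈ R and (y, z) ∈ S} be their join. Let p, q > 0 be reals with 1/p + 1/q ≤ 1 (allowing p or q to be ∞ with 1/∞ = 0), and let M = min(|Π_Y(R)|, |Π_Y(S)|), where Π_Y denotes projection onto the join attribute (the second coordinate of R and the first coordinate of S). Then |Q| ≤ ||deg_R(X|Y)||_p · ||deg_S(Z|Y)||_q · M^{1 − 1/p − 1/q}. In particular, taking p = q = 2 gives |Q| ≤ ||deg_R(X|Y)||_2 · ||deg_S(Z|Y)||_2. -/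
/-!
Counting `Q` by its join attribute gives `|Q| = ∑ y, deg_R(X|Y = y) * deg_S(Z|Y = y)`, a sum over
the common values of `Y`. Hölder's inequality with `1/r = 1/p + 1/q` bounds the `ℓ_r`-norm of the
summand by the product of the two norms, and passing from `ℓ_r` down to `ℓ_1` costs a factor
`m ^ (1 - 1/r)`, where `m ≤ M` is the number of common values. Finite sums are viewed as
integrals against a counting measure so that Hölder's inequality for measures applies, with its
uniform treatment of infinite exponents.
-/

open scoped BigOperators ENNReal

namespace JoinBounds

noncomputable section

variable {α β γ : Type*}

/-- Degree of the value `y` in the second coordinate of the binary relation `R`: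
the number of distinct `x` with `(x, y) ∈ R`. -/
def degSnd [DecidableEq α] [DecidableEq β] (R : Finset (α × β)) (y : β) : ℕ :=
  (R.filter fun t => t.2 = y).card

/-- Degree of the value `y` in the first coordinate of the binary relation `S`:
the number of distinct `z` with `(y, z) ∈ S`. -/
def degFst [DecidableEq β] [DecidableEq γ] (S : Finset (β × γ)) (y : β) : ℕ :=
  (S.filter fun t => t.1 = y).card

/-- The `ℓ_p`-norm (`p ∈ (0,∞]`) of the degree sequence `deg_R(X|Y)` of a binary relation `R`,
conditioned on the second coordinate. -/
def lpSnd [DecidableEq α] [DecidableEq β] (R : Finset (α × β)) (p : ℝ≥0∞) : ℝ :=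
  if p = ⊤ then (((R.image Prod.snd).sup fun y => degSnd R y : ℕ) : ℝ)
  else (∑ y ∈ R.image Prod.snd, (degSnd R y : ℝ) ^ p.toReal) ^ (1 / p.toReal)

/-- The `ℓ_p`-norm (`p ∈ (0,∞]`) of the degree sequence `deg_S(Z|Y)` of a binary relation `S`,
conditioned on the first coordinate. -/
def lpFst [DecidableEq β] [DecidableEq γ] (S : Finset (β × γ)) (p : ℝ≥0∞) : ℝ :=
  if p = ⊤ then (((S.image Prod.fst).sup fun y => degFst S y : ℕ) : ℝ)
  else (∑ y ∈ S.image Prod.fst, (degFst S y : ℝ) ^ p.toReal) ^ (1 / p.toReal)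

/-- The join `Q = {(x, y, z) : (x, y) ∈ R ∧ (y, z) ∈ S}`. -/
def join [DecidableEq α] [DecidableEq β] [DecidableEq γ]
    (R : Finset (α × β)) (S : Finset (β × γ)) : Finset (α × β × γ) :=
  ((R ×ˢ S).filter fun t => t.1.2 = t.2.1).image fun t => (t.1.1, t.1.2, t.2.2)

end

open MeasureTheory

theorem toReal_add_of_add_ne_top {a b : ℝ≥0∞} (h : a + b ≠ ⊤) :
    (a + b).toReal = a.toReal + b.toReal :=
  ENNReal.toReal_add (ENNReal.add_ne_top.1 h).1 (ENNReal.add_ne_top.1 h).2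

theorem one_sub_toReal_sub_toReal_nonneg {a b : ℝ≥0∞} (h : a + b ≤ 1) :
    0 ≤ 1 - a.toReal - b.toReal := by
  rw [sub_sub, ← toReal_add_of_add_ne_top (ne_top_of_le_ne_top ENNReal.one_ne_top h), sub_nonneg]
  exact ENNReal.toReal_mono ENNReal.one_ne_top h

theorem eLpNorm_one_mul_le {Ω 𝕜 : Type*} [MeasurableSpace Ω] [NormedRing 𝕜] {μ : Measure Ω}
    {f g : Ω → 𝕜} (hf : AEStronglyMeasurable f μ) (hg : AEStronglyMeasurable g μ)
    {p q : ℝ≥0∞} (hpq : 1 / p + 1 / q ≤ 1) :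
    eLpNorm (f * g) 1 μ ≤ eLpNorm f p μ * eLpNorm g q μ *
      μ Set.univ ^ (1 - (1 / p).toReal - (1 / q).toReal) := by
  set r : ℝ≥0∞ := (p⁻¹ + q⁻¹)⁻¹ with hr
  have : ENNReal.HolderTriple p q r := .of p q
  have one_le_r : 1 ≤ r := by
    rw [hr, ENNReal.one_le_inv]
    simpa only [one_div] using hpq
  have exponent_eq : 1 / (1 : ℝ≥0∞).toReal - 1 / r.toReal =
      1 - (1 / p).toReal - (1 / q).toReal := by
    rw [sub_sub, ← toReal_add_of_add_ne_top (ne_top_of_le_ne_top ENNReal.one_ne_top hpq)]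
    simp [hr]
  calc eLpNorm (f * g) 1 μ
      ≤ eLpNorm (f * g) r μ * μ Set.univ ^ (1 / (1 : ℝ≥0∞).toReal - 1 / r.toReal) :=
        eLpNorm_le_eLpNorm_mul_rpow_measure_univ one_le_r (hf.mul hg)
    _ ≤ eLpNorm f p μ * eLpNorm g q μ *
          μ Set.univ ^ (1 - (1 / p).toReal - (1 / q).toReal) := by
        rw [exponent_eq]
        gcongr
        simpa only [smul_eq_mul] using eLpNorm_smul_le_mul_eLpNorm (r := r) hg hf

/-- The `ℓ_p`-norm, `p ∈ (0, ∞]`, of the finite sequence `(f i)` indexed by `i ∈ s`. The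
exponent `∞` needs its own branch because `(⊤ : ℝ≥0∞).toReal = 0`. Both `lpSnd` and `lpFst` unfold
to it. -/
noncomputable def natLpNorm {ι : Type*} (s : Finset ι) (f : ι → ℕ) (p : ℝ≥0∞) : ℝ :=
  if p = ⊤ then ((s.sup f : ℕ) : ℝ) else (∑ i ∈ s, (f i : ℝ) ^ p.toReal) ^ (1 / p.toReal)

section natLpNorm

variable {ι : Type*} {s t : Finset ι} {f : ι → ℕ} {p : ℝ≥0∞}

theorem natLpNorm_nonneg : 0 ≤ natLpNorm s f p := by
  unfold natLpNorm
  split_ifs <;> positivity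

theorem natLpNorm_mono (hst : s ⊆ t) : natLpNorm s f p ≤ natLpNorm t f p := by
  unfold natLpNorm
  split_ifs
  · exact_mod_cast Finset.sup_mono hst
  · gcongr

theorem eLpNorm_count_restrict_le_natLpNorm [MeasurableSpace ι] [MeasurableSingletonClass ι]
    (s : Finset ι) (f : ι → ℕ) (p : ℝ≥0∞) :
    eLpNorm (fun i ↦ (f i : ℝ)) p (Measure.count.restrict s) ≤
      ENNReal.ofReal (natLpNorm s f p) := by
  unfold natLpNorm
  split_ifs with hp
  · rw [hp, eLpNorm_exponent_top]
    refine eLpNormEssSup_le_of_ae_bound ((ae_restrict_iff' s.measurableSet).2 (.of_forall ?_))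
    intro i hi
    simpa using Finset.le_sup (f := f) hi
  · rcases eq_or_ne p 0 with rfl | hp0
    · simp
    refine (eLpNorm_eq_lintegral_rpow_enorm_toReal hp0 hp).trans_le (le_of_eq ?_)
    rw [lintegral_finset, ← ENNReal.ofReal_rpow_of_nonneg (by positivity) (by positivity),
      ENNReal.ofReal_sum_of_nonneg fun _ _ ↦ by positivity]
    simp [← ENNReal.ofReal_rpow_of_nonneg (Nat.cast_nonneg _) ENNReal.toReal_nonneg]

theorem sum_mul_le_natLpNorm_mul_natLpNorm (s : Finset ι) (f g : ι → ℕ) {p q : ℝ≥0∞}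
    (hpq : 1 / p + 1 / q ≤ 1) :
    ∑ i ∈ s, (f i : ℝ) * g i ≤ natLpNorm s f p * natLpNorm s g q *
      (s.card : ℝ) ^ (1 - (1 / p).toReal - (1 / q).toReal) := by
  let _ : MeasurableSpace ι := ⊤
  have bound_nonneg : 0 ≤ natLpNorm s f p * natLpNorm s g q *
      (s.card : ℝ) ^ (1 - (1 / p).toReal - (1 / q).toReal) :=
    mul_nonneg (mul_nonneg natLpNorm_nonneg natLpNorm_nonneg) (by positivity)
  rw [← ENNReal.ofReal_le_ofReal_iff bound_nonneg]
  calc ENNReal.ofReal (∑ i ∈ s, (f i : ℝ) * g i)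
      = eLpNorm ((fun i ↦ (f i : ℝ)) * fun i ↦ (g i : ℝ)) 1 (Measure.count.restrict s) := by
        rw [eLpNorm_one_eq_lintegral_enorm, lintegral_finset,
          ENNReal.ofReal_sum_of_nonneg fun _ _ ↦ by positivity]
        simp [ENNReal.ofReal_mul]
    _ ≤ eLpNorm (fun i ↦ (f i : ℝ)) p (Measure.count.restrict s) *
          eLpNorm (fun i ↦ (g i : ℝ)) q (Measure.count.restrict s) *
          Measure.count.restrict (s : Set ι) Set.univ ^ (1 - (1 / p).toReal - (1 / q).toReal) :=
        eLpNorm_one_mul_le measurable_from_top.aestronglyMeasurable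
          measurable_from_top.aestronglyMeasurable hpq
    _ ≤ ENNReal.ofReal (natLpNorm s f p) * ENNReal.ofReal (natLpNorm s g q) *
          (s.card : ℝ≥0∞) ^ (1 - (1 / p).toReal - (1 / q).toReal) := by
        rw [Measure.restrict_apply_univ, Measure.count_apply_finset]
        gcongr <;> exact eLpNorm_count_restrict_le_natLpNorm ..
    _ = _ := by
        rw [ENNReal.ofReal_mul (mul_nonneg natLpNorm_nonneg natLpNorm_nonneg),
          ENNReal.ofReal_mul natLpNorm_nonneg, ← ENNReal.ofReal_rpow_of_nonneg (by positivity)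
          (one_sub_toReal_sub_toReal_nonneg hpq), ENNReal.ofReal_natCast]

end natLpNorm

section join

variable {α β γ : Type*} [DecidableEq α] [DecidableEq β] [DecidableEq γ]

theorem card_join_eq_sum (R : Finset (α × β)) (S : Finset (β × γ)) :
    (join R S).card = ∑ y ∈ R.image Prod.snd ∩ S.image Prod.fst, degSnd R y * degFst S y := by
  have glue_injOn : Set.InjOn (fun t : (α × β) × (β × γ) ↦ (t.1.1, t.1.2, t.2.2))
      ((R ×ˢ S).filter fun t ↦ t.1.2 = t.2.1) := by
    rintro ⟨⟨x, y⟩, y₁, z⟩ h ⟨⟨x', y'⟩, y₁', z'⟩ h' heq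
    simp_all
  have fiber_eq (y : β) :
      (((R ×ˢ S).filter fun t ↦ t.1.2 = t.2.1).filter fun t ↦ t.1.2 = y) =
        (R.filter fun t ↦ t.2 = y) ×ˢ (S.filter fun t ↦ t.1 = y) := by
    grind
  rw [join, Finset.card_image_of_injOn glue_injOn,
    Finset.card_eq_sum_card_fiberwise (f := fun t ↦ t.1.2)
      (t := R.image Prod.snd ∩ S.image Prod.fst)]
  · simp only [fiber_eq, Finset.card_product, degSnd, degFst]
  · rintro ⟨⟨x, y⟩, y', z⟩ h
    have h' : ((x, y) ∈ R ∧ (y', z) ∈ S) ∧ y = y' := by simpa using h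
    obtain ⟨⟨hR, hS⟩, rfl⟩ := h'
    exact Finset.mem_inter.2 ⟨Finset.mem_image_of_mem _ hR, Finset.mem_image_of_mem _ hS⟩

theorem card_join_le_lpSnd_mul_lpFst (R : Finset (α × β)) (S : Finset (β × γ)) {p q : ℝ≥0∞}
    (hpq : 1 / p + 1 / q ≤ 1) :
    ((join R S).card : ℝ) ≤ lpSnd R p * lpFst S q *
      ((R.image Prod.snd ∩ S.image Prod.fst).card : ℝ) ^
        (1 - (1 / p).toReal - (1 / q).toReal) := by
  set T := R.image Prod.snd ∩ S.image Prod.fst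
  calc ((join R S).card : ℝ)
      = ∑ y ∈ T, (degSnd R y : ℝ) * degFst S y := by exact_mod_cast card_join_eq_sum R S
    _ ≤ natLpNorm T (degSnd R) p * natLpNorm T (degFst S) q *
          (T.card : ℝ) ^ (1 - (1 / p).toReal - (1 / q).toReal) :=
        sum_mul_le_natLpNorm_mul_natLpNorm T (degSnd R) (degFst S) hpq
    _ ≤ natLpNorm (R.image Prod.snd) (degSnd R) p * natLpNorm (S.image Prod.fst) (degFst S) q *
          (T.card : ℝ) ^ (1 - (1 / p).toReal - (1 / q).toReal) := by
        gcongr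
        · exact natLpNorm_nonneg
        · exact natLpNorm_nonneg
        · exact natLpNorm_mono Finset.inter_subset_left
        · exact natLpNorm_mono Finset.inter_subset_right

end join

/-- **single join, Hölder-type bound.** For `p, q ∈ (0, ∞]` with
`1/p + 1/q ≤ 1` and `M = min(|Π_Y(R)|, |Π_Y(S)|)`,
`|Q| ≤ ‖deg_R(X|Y)‖_p · ‖deg_S(Z|Y)‖_q · M^{1 − 1/p − 1/q}`; in particular (`p = q = 2`)
`|Q| ≤ ‖deg_R(X|Y)‖_2 · ‖deg_S(Z|Y)‖_2`. -/
theorem single_join_bound {α β γ : Type*} [DecidableEq α] [DecidableEq β] [DecidableEq γ]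
    (R : Finset (α × β)) (S : Finset (β × γ))
    (p q : ℝ≥0∞) (hp : 0 < p) (hq : 0 < q) (hpq : 1 / p + 1 / q ≤ 1) :
    ((join R S).card : ℝ)
        ≤ lpSnd R p * lpFst S q *
          ((min (R.image Prod.snd).card (S.image Prod.fst).card : ℝ)
            ^ (1 - (1 / p).toReal - (1 / q).toReal)) ∧
    ((join R S).card : ℝ) ≤ lpSnd R 2 * lpFst S 2 := by
  constructor
  · refine (card_join_le_lpSnd_mul_lpFst R S hpq).trans (mul_le_mul_of_nonneg_left ?_
      (mul_nonneg natLpNorm_nonneg natLpNorm_nonneg))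
    refine Real.rpow_le_rpow (by positivity) (le_min ?_ ?_) (one_sub_toReal_sub_toReal_nonneg hpq)
    · exact_mod_cast Finset.card_le_card Finset.inter_subset_left
    · exact_mod_cast Finset.card_le_card Finset.inter_subset_right
  · have exponent_eq_zero : (1 : ℝ) - (1 / (2 : ℝ≥0∞)).toReal - (1 / (2 : ℝ≥0∞)).toReal = 0 := by
      norm_num
    have h := card_join_le_lpSnd_mul_lpFst R S (p := 2) (q := 2)
      (by simp [ENNReal.inv_two_add_inv_two])
    rwa [exponent_eq_zero, Real.rpow_zero, mul_one] at h

end JoinBounds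
end
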